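/- Let Ω ⊆ ℝ^n be a bounded convex set and f : Ω → ℝ a convex Lipschitz function with constant l. Define f̃(x) = sup{λf(y)+(1-λ)f(z) : x = λy+(1-λ)z, y,z ∈ Ω, λ ≥ 1} for x ∈ ℝ^n (assuming Ω affinely spans ℝ^n). Then f̃ is finite everywhere, agrees with f on Ω, and is convex on ℝ^n. -/

import Mathlib

/-- The set of values `λ f(y) + (1-λ) f(z)` over all representations
`x = λ y + (1-λ) z` with `y, z ∈ Ω` and `λ ≥ 1`. -/
def outerSet {E : Type*} [AddCommGroup E] [Module ℝ E] (Ω : Set E) (f : E → ℝ) (x : E) :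
    Set ℝ :=
  { r | ∃ (l : ℝ) (y z : E), y ∈ Ω ∧ z ∈ Ω ∧ 1 ≤ l ∧
      x = l • y + (1 - l) • z ∧ r = l * f y + (1 - l) * f z }

/-- The extension of `f` beyond `Ω` as the supremum over all such representations. -/
noncomputable def outerExt {E : Type*} [AddCommGroup E] [Module ℝ E]
    (Ω : Set E) (f : E → ℝ) (x : E) : ℝ :=
  sSup (outerSet Ω f x)

open Filter Topology in
lemma ev_mem {n : ℕ} {Ω : Set (EuclideanSpace ℝ (Fin n))} {p : EuclideanSpace ℝ (Fin n)}
    (hp : p ∈ interior Ω) (a : EuclideanSpace ℝ (Fin n)) :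
    ∀ᶠ t : ℝ in 𝓝[>] 0, p + t • (a - p) ∈ Ω := by
  have hc : Continuous (fun t : ℝ => p + t • (a - p)) := by fun_prop
  have h1 : Tendsto (fun t : ℝ => p + t • (a - p)) (𝓝 0) (𝓝 p) := by
    have := hc.tendsto 0
    simpa using this
  exact (h1.mono_left nhdsWithin_le_nhds).eventually (mem_interior_iff_mem_nhds.mp hp)

lemma val_mem {n : ℕ} {Ω : Set (EuclideanSpace ℝ (Fin n))} (f : EuclideanSpace ℝ (Fin n) → ℝ)
    {p a : EuclideanSpace ℝ (Fin n)} {t : ℝ} (hp : p ∈ Ω) (ht : 0 < t) (ht1 : t ≤ 1)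
    (ha : p + t • (a - p) ∈ Ω) :
    t⁻¹ * f (p + t • (a - p)) + (1 - t⁻¹) * f p ∈ outerSet Ω f a := by
  refine ⟨t⁻¹, p + t • (a - p), p, ha, hp, (one_le_inv₀ ht).mpr ht1, ?_, rfl⟩
  rw [smul_add, smul_smul, inv_mul_cancel₀ ht.ne']
  module

open Filter Topology in
lemma key_interior {n : ℕ} {Ω : Set (EuclideanSpace ℝ (Fin n))}
    {f : EuclideanSpace ℝ (Fin n) → ℝ} (hf : ConvexOn ℝ Ω f)
    (hbdd : ∀ x, BddAbove (outerSet Ω f x))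
    {p z a b : EuclideanSpace ℝ (Fin n)} {m α β : ℝ} (hp : p ∈ interior Ω) (hz : z ∈ Ω)
    (hm : 1 ≤ m) (hα : 0 ≤ α) (hβ : 0 ≤ β) (hαβ : α + β = 1)
    (hx : α • a + β • b = m • p + (1 - m) • z) :
    m * f p + (1 - m) * f z ≤ α * outerExt Ω f a + β * outerExt Ω f b := by
  have hpΩ := interior_subset hp
  have h1 : ∀ᶠ t : ℝ in 𝓝[>] 0, t < 1 := by
    exact (eventually_lt_nhds (by norm_num : (0:ℝ) < 1)).filter_mono nhdsWithin_le_nhds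
  have h0 : ∀ᶠ t : ℝ in 𝓝[>] 0, 0 < t := eventually_mem_nhdsWithin
  obtain ⟨t, ⟨⟨ha, hb⟩, ht1⟩, ht⟩ := (((ev_mem hp a).and (ev_mem hp b)).and h1).and h0 |>.exists
  have va := le_csSup (hbdd a) (val_mem f hpΩ ht ht1.le ha)
  have vb := le_csSup (hbdd b) (val_mem f hpΩ ht ht1.le hb)
  change _ ≤ outerExt Ω f a at va
  change _ ≤ outerExt Ω f b at vb
  set a' := p + t • (a - p) with ha'
  set b' := p + t • (b - p) with hb'
  set A := outerExt Ω f a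
  set B := outerExt Ω f b
  have va' : f a' + (t - 1) * f p ≤ t * A := by
    have := mul_le_mul_of_nonneg_left va ht.le
    calc _ = t * (t⁻¹ * f a' + (1 - t⁻¹) * f p) := by field_simp
      _ ≤ _ := this
  have vb' : f b' + (t - 1) * f p ≤ t * B := by
    have := mul_le_mul_of_nonneg_left vb ht.le
    calc _ = t * (t⁻¹ * f b' + (1 - t⁻¹) * f p) := by field_simp
      _ ≤ _ := this
  have hx'Ω := hf.1 ha hb hα hβ hαβ
  have hx' := hf.2 ha hb hα hβ hαβ
  have hxe : α • a' + β • b' = p + (t * (m - 1)) • (p - z) := by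
    have : α • a' + β • b' = ((α + β) * (1 - t)) • p + t • (α • a + β • b) := by
      rw [ha', hb']; module
    rw [this, hx, hαβ]; module
  set x' := α • a' + β • b'
  set w := t * (m - 1) with hw
  have hw0 : 0 ≤ w := mul_nonneg ht.le (by linarith)
  have hpc := hf.2 hx'Ω hz (by positivity : 0 ≤ 1 / (1 + w)) (by positivity : 0 ≤ w / (1 + w))
    (by field_simp)
  have hpe : (1 / (1 + w)) • x' + (w / (1 + w)) • z = p := by
    rw [hxe]
    have h : (1 + w) ≠ 0 := by positivity
    match_scalars <;> field_simp <;> ring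
  rw [hpe] at hpc
  simp only [smul_eq_mul] at hpc hx'
  have hpc' : (1 + w) * f p ≤ f x' + w * f z := by
    have := mul_le_mul_of_nonneg_left hpc (by positivity : 0 ≤ 1 + w)
    calc _ ≤ _ := this
      _ = _ := by field_simp
  have e1 := mul_le_mul_of_nonneg_left va' hα
  have e2 := mul_le_mul_of_nonneg_left vb' hβ
  have e3 : α * ((t - 1) * f p) + β * ((t - 1) * f p) = (t - 1) * f p := by
    rw [← add_mul, hαβ, one_mul]
  refine le_of_mul_le_mul_left ?_ ht
  have e4 : t * (m * f p + (1 - m) * f z) = (1 + w) * f p - w * f z + (t - 1) * f p := by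
    rw [hw]; ring
  rw [e4]
  linarith

theorem outerExt_extension {n : ℕ}
    (Ω : Set (EuclideanSpace ℝ (Fin n))) (hb : Bornology.IsBounded Ω)
    (hΩ : Convex ℝ Ω) (hspan : affineSpan ℝ Ω = ⊤)
    (f : EuclideanSpace ℝ (Fin n) → ℝ) (hf : ConvexOn ℝ Ω f)
    (l : ℝ) (hlip : ∀ x ∈ Ω, ∀ y ∈ Ω, |f x - f y| ≤ l * ‖x - y‖) :
    (∀ x, (outerSet Ω f x).Nonempty ∧ BddAbove (outerSet Ω f x)) ∧
    Set.EqOn (outerExt Ω f) f Ω ∧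
    ConvexOn ℝ Set.univ (outerExt Ω f) := by
  obtain ⟨c, hc⟩ := hΩ.interior_nonempty_iff_affineSpan_eq_top.mpr hspan
  have hcΩ := interior_subset hc
  obtain ⟨R, hR⟩ := hb.exists_norm_le
  have hlip' : ∀ x ∈ Ω, ∀ y ∈ Ω, |f x - f y| ≤ |l| * ‖x - y‖ := fun x hx y hy =>
    (hlip x hx y hy).trans (mul_le_mul_of_nonneg_right (le_abs_self l) (norm_nonneg _))
  have hne : ∀ x, (outerSet Ω f x).Nonempty := by
    intro x
    have h1 : ∀ᶠ t : ℝ in nhdsWithin 0 (Set.Ioi 0), t < 1 :=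
      (eventually_lt_nhds (by norm_num : (0:ℝ) < 1)).filter_mono nhdsWithin_le_nhds
    have h0 : ∀ᶠ t : ℝ in nhdsWithin 0 (Set.Ioi 0), 0 < t := eventually_mem_nhdsWithin
    obtain ⟨t, ⟨ha, ht1⟩, ht⟩ := ((ev_mem hc x).and h1).and h0 |>.exists
    exact ⟨_, val_mem f hcΩ ht ht1.le ha⟩
  have hbdd : ∀ x, BddAbove (outerSet Ω f x) := by
    intro x
    refine ⟨f c + |l| * (R + ‖c‖) + |l| * (‖x‖ + R), ?_⟩
    rintro r ⟨m, y, z, hy, hz, hm, hx, rfl⟩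
    have h1 := (le_abs_self _).trans (hlip' y hy c hcΩ)
    have h2 := (le_abs_self _).trans (hlip' y hy z hz)
    have h3 : ‖y - c‖ ≤ R + ‖c‖ := (norm_sub_le _ _).trans (by linarith [hR y hy])
    have h4 : ‖x - y‖ ≤ ‖x‖ + R := (norm_sub_le _ _).trans (by linarith [hR y hy])
    have h5 : x - y = (m - 1) • (y - z) := by rw [hx]; module
    have h6 : ‖x - y‖ = (m - 1) * ‖y - z‖ := by
      rw [h5, norm_smul, Real.norm_of_nonneg (by linarith)]
    have h7 := mul_le_mul_of_nonneg_left h2 (by linarith : 0 ≤ m - 1)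
    have h8 : (m - 1) * (|l| * ‖y - z‖) = |l| * ‖x - y‖ := by rw [h6]; ring
    have h9 := mul_le_mul_of_nonneg_left h3 (abs_nonneg l)
    have h10 := mul_le_mul_of_nonneg_left h4 (abs_nonneg l)
    linarith
  refine ⟨fun x => ⟨hne x, hbdd x⟩, ?_, convex_univ, ?_⟩
  · intro x hx
    apply le_antisymm
    · refine csSup_le (hne x) ?_
      rintro r ⟨m, y, z, hy, hz, hm, hxe, rfl⟩
      have hm0 : 0 < m := by linarith
      have h := hf.2 hx hz (by positivity : 0 ≤ 1 / m)
        (div_nonneg (by linarith) hm0.le : 0 ≤ (m - 1) / m) (by field_simp; ring)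
      have he : (1 / m) • x + ((m - 1) / m) • z = y := by
        rw [hxe]
        match_scalars <;> field_simp <;> ring
      rw [he] at h
      simp only [smul_eq_mul] at h
      have h' := mul_le_mul_of_nonneg_left h hm0.le
      have e : m * (1 / m * f x + (m - 1) / m * f z) = f x + (m - 1) * f z := by field_simp
      linarith
    · exact le_csSup (hbdd x) ⟨1, x, x, hx, hx, le_rfl, by simp, by simp⟩
  · intro a _ b _ α β hα hβ hαβ
    refine csSup_le (hne _) ?_
    rintro r ⟨m, y, z, hy, hz, hm, hxe, rfl⟩
    simp only [smul_eq_mul]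
    set V := α * outerExt Ω f a + β * outerExt Ω f b with hV
    set K := |l| * ‖c - y‖ with hK
    have main : ∀ s : ℝ, 0 < s → s < 1 →
        m * f y + (1 - m) * f z - V ≤ s * (m * K + (1 - m) * f z + m * f c - V) := by
      intro s hs hs1
      have hs' : 0 < 1 - s := by linarith
      have hd : 0 < m - 1 + s := by linarith
      set p := y + s • (c - y) with hp
      have hpi : p ∈ interior Ω := by
        have := hΩ.combo_interior_self_mem_interior hc hy hs hs'.le (by ring)
        have e : p = s • c + (1 - s) • y := by rw [hp]; module
        rwa [e]
      have hpΩ := interior_subset hpi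
      have hu0 : 0 ≤ s * m / (m - 1 + s) := by positivity
      have hv0 : 0 ≤ (m - 1) * (1 - s) / (m - 1 + s) :=
        div_nonneg (mul_nonneg (by linarith) hs'.le) hd.le
      have huv : (m - 1) * (1 - s) / (m - 1 + s) + s * m / (m - 1 + s) = 1 := by
        field_simp; ring
      have hzΩ := hΩ hz hcΩ hv0 hu0 huv
      have hzf := hf.2 hz hcΩ hv0 hu0 huv
      have hm1 : 1 ≤ m / (1 - s) := by rw [le_div_iff₀ hs']; linarith
      have hk := key_interior hf hbdd hpi hzΩ hm1 hα hβ hαβ (a := a) (b := b) (by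
        rw [hxe, hp]
        match_scalars <;> field_simp <;> ring)
      rw [← hV] at hk
      simp only [smul_eq_mul] at hzf
      set z' := ((m - 1) * (1 - s) / (m - 1 + s)) • z + (s * m / (m - 1 + s)) • c
      have hk2 := mul_le_mul_of_nonneg_left hk hs'.le
      have e1 : (1 - s) * (m / (1 - s) * f p + (1 - m / (1 - s)) * f z')
          = m * f p - (m - 1 + s) * f z' := by field_simp; ring
      have hz2 := mul_le_mul_of_nonneg_left hzf hd.le
      have e2 : (m - 1 + s) * ((m - 1) * (1 - s) / (m - 1 + s) * f z + s * m / (m - 1 + s) * f c)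
          = (m - 1) * (1 - s) * f z + s * m * f c := by field_simp
      have hpl := (neg_abs_le _).trans' (neg_le_neg (hlip' p hpΩ y hy))
      have e3 : |l| * ‖p - y‖ = s * K := by
        have : p - y = s • (c - y) := by rw [hp]; module
        rw [this, norm_smul, Real.norm_of_nonneg hs.le, hK]; ring
      rw [e3] at hpl
      have hpm := mul_le_mul_of_nonneg_left hpl (by linarith : 0 ≤ m)
      rw [e1] at hk2
      rw [e2] at hz2
      linarith
    by_contra hcon
    push Not at hcon
    set M := m * K + (1 - m) * f z + m * f c - V
    have hD : 0 < m * f y + (1 - m) * f z - V := by linarith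
    set D := m * f y + (1 - m) * f z - V
    have hpos : 0 < D + |M| := by positivity
    have h := main (D / (2 * (D + |M|))) (by positivity) (by
      rw [div_lt_one (by positivity)]; linarith [abs_nonneg M])
    have h2 : D / (2 * (D + |M|)) * M ≤ D / (2 * (D + |M|)) * (D + |M|) :=
      mul_le_mul_of_nonneg_left (by linarith [le_abs_self M]) (by positivity)
    have h3 : D / (2 * (D + |M|)) * (D + |M|) = D / 2 := by field_simp
    linarith
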